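/- For every natural number N there exists a finite connected simple graph G that is 3-regular (cubic), 2-connected, has more than N vertices, and contains at least two distinct Šoltés vertices. Consequently, there exist infinitely many cubic 2-connected graphs with at least two Šoltés vertices. -/

import Mathlib

open SimpleGraph Finset

/-- A `Fintype` instance for the vertex set of a vertex-deleted subgraph. -/
noncomputable instance instFintypeNe {V : Type*} [Fintype V] (v : V) :
    Fintype {u : V // u ≠ v} :=
  (Set.toFinite {u : V | u ≠ v}).fintype

/-- The graph obtained from `G` by deleting the vertex `v` (an induced subgraph). -/
def deleteVertex {V : Type*} (G : SimpleGraph V) (v : V) :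
    SimpleGraph {u : V // u ≠ v} :=
  G.induce {u : V | u ≠ v}

/-- The Wiener index of a finite simple graph: the sum of distances over all
unordered pairs of vertices. -/
noncomputable def wiener {V : Type*} [Fintype V] (G : SimpleGraph V) : ℕ :=
  (∑ u : V, ∑ v : V, G.dist u v) / 2

/-- `v` is a Šoltés vertex of `G` if `G - v` is connected and has the same Wiener index. -/
def IsSoltes {V : Type*} [Fintype V] (G : SimpleGraph V) (v : V) : Prop :=
  (deleteVertex G v).Connected ∧ wiener (deleteVertex G v) = wiener G

/-- A graph is cubic (3-regular) if every vertex has exactly 3 neighbours. -/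
def IsCubic {V : Type*} (G : SimpleGraph V) : Prop :=
  ∀ v : V, (G.neighborSet v).ncard = 3

/-- A finite graph is 2-connected if it is connected, has at least 3 vertices,
and stays connected after deleting any one vertex. -/
def TwoConnected {V : Type*} [Fintype V] (G : SimpleGraph V) : Prop :=
  G.Connected ∧ 3 ≤ Fintype.card V ∧ ∀ v : V, (deleteVertex G v).Connected

/-!
The graph `soltesLadder c q` is a modified ladder with columns `0, …, c + q`, invariant under
exchange of its two rows, in which the two vertices of column `c` (the hubs) separate the columns
on their left from those on their right. Removing one hub loses its transmission
`c² + 2c + q² - q + 8`. It leaves distances within either side unchanged, but a path across that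
used the removed hub must now use the other one, and these detours cost `c(2q + 1) + (c + 1)`
in total. The two quantities agree when `(c - q)² = q - 7`, which has the solutions `q = N² + 7`,
`c = q + N`. By symmetry both hubs are then Šoltés vertices.
-/

section Distance

variable {V W : Type*} {G : SimpleGraph V} {H : SimpleGraph W}

theorem le_add_dist_of_adj_le {f : V → ℕ} (hf : ∀ x y, G.Adj x y → f y ≤ f x + 1)
    (hG : G.Connected) (x y : V) : f y ≤ f x + G.dist x y := by
  obtain ⟨p, hp⟩ := hG.exists_walk_length_eq_dist x y
  rw [← hp]
  clear hp
  induction p with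
  | nil => exact Nat.le_refl _
  | cons h p ih =>
    have := hf _ _ h
    rw [Walk.length_cons]
    omega

theorem dist_map_le (hG : G.Connected) (hH : H.Connected) {f : V → W}
    (hf : ∀ x y, G.Adj x y → f x = f y ∨ H.Adj (f x) (f y)) (x y : V) :
    H.dist (f x) (f y) ≤ G.dist x y := by
  have hlip : ∀ y z, G.Adj y z → H.dist (f x) (f z) ≤ H.dist (f x) (f y) + 1 := by
    intro y z hyz
    rcases hf y z hyz with heq | hadj
    · rw [heq]
      exact Nat.le_succ _
    · rw [← dist_eq_one_iff_adj.mpr hadj]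
      exact hH.dist_triangle
  simpa only [dist_self, zero_add] using le_add_dist_of_adj_le hlip hG x y

theorem connected_of_exists_adj_lt {b : V} (f : V → ℕ)
    (hf : ∀ x, x ≠ b → ∃ y, G.Adj x y ∧ f y < f x) : G.Connected := by
  refine (connected_iff_exists_forall_reachable G).mpr ⟨b, fun x ↦ Reachable.symm ?_⟩
  induction hn : f x using Nat.strong_induction_on generalizing x with
  | _ n ih =>
    by_cases hx : x = b
    · exact hx ▸ Reachable.refl _
    · obtain ⟨y, hxy, hlt⟩ := hf x hx
      exact hxy.reachable.trans (ih _ (hn ▸ hlt) y rfl)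

theorem dist_eq_of_exists_adj_succ {b : V} {f : V → ℕ} (hb : f b = 0)
    (hlip : ∀ x y, G.Adj x y → f y ≤ f x + 1)
    (hdesc : ∀ x, x ≠ b → ∃ y, G.Adj x y ∧ f y + 1 = f x) (x : V) : G.dist b x = f x := by
  have hG : G.Connected := connected_of_exists_adj_lt f fun x hx ↦
    (hdesc x hx).imp fun y ⟨hxy, hy⟩ ↦ ⟨hxy, hy ▸ Nat.lt_succ_self _⟩
  refine le_antisymm ?_ (by simpa only [hb, zero_add] using le_add_dist_of_adj_le hlip hG b x)
  induction hn : f x generalizing x with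
  | zero =>
    by_contra! hpos
    obtain ⟨y, -, hy⟩ := hdesc x fun hx ↦ by simp [hx] at hpos
    omega
  | succ n ih =>
    obtain ⟨y, hxy, hy⟩ := hdesc x fun hx ↦ by simp [hx, hb] at hn
    calc G.dist b x ≤ G.dist b y + G.dist y x := hG.dist_triangle
      _ ≤ n + 1 := by
        rw [dist_eq_one_iff_adj.mpr hxy.symm]
        exact Nat.add_le_add_right (ih y (by omega)) 1

theorem dist_le_dist_deleteVertex {v : V} (hG : G.Connected) (hGv : (deleteVertex G v).Connected)
    (x y : {u // u ≠ v}) : G.dist x y ≤ (deleteVertex G v).dist x y :=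
  dist_map_le hGv hG (fun _ _ h ↦ Or.inr h) x y

theorem dist_deleteVertex_eq_of_retraction {v : V} (hG : G.Connected)
    (hGv : (deleteVertex G v).Connected) {r : V → {u // u ≠ v}}
    (hr : ∀ x y, G.Adj x y → r x = r y ∨ G.Adj (r x) (r y)) {x y : {u // u ≠ v}}
    (hx : r x = x) (hy : r y = y) : (deleteVertex G v).dist x y = G.dist x y := by
  refine le_antisymm ?_ (dist_le_dist_deleteVertex hG hGv x y)
  simpa only [hx, hy] using dist_map_le hG hGv hr x y

theorem wiener_deleteVertex_eq_of_detour [Fintype V] {v : V} {η : V → V → ℕ}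
    (hdist : ∀ x y : {u // u ≠ v}, (deleteVertex G v).dist x y = G.dist x y + η x y + η y x)
    (hleft : ∀ x, η v x = 0) (hright : ∀ x, η x v = 0)
    (hsum : ∑ x, ∑ y, η x y = ∑ y, G.dist v y) : wiener (deleteVertex G v) = wiener G := by
  classical
  have hsplit (f : V → ℕ) : ∑ x, f x = f v + ∑ x : {u // u ≠ v}, f x := by
    rw [Fintype.sum_eq_add_sum_subtype_ne f v]
    congr!
  have hη : ∑ x : {u // u ≠ v}, ∑ y : {u // u ≠ v}, η x y = ∑ y, G.dist v y := by
    rw [← hsum, hsplit]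
    simp only [hleft, sum_const_zero, zero_add]
    refine sum_congr rfl fun x _ ↦ ?_
    rw [hsplit (η x), hright, zero_add]
  have hG : ∑ x, ∑ y, G.dist x y =
      ∑ x : {u // u ≠ v}, ∑ y : {u // u ≠ v}, G.dist x y + 2 * ∑ y, G.dist v y := by
    have hrow : ∑ x : {u // u ≠ v}, G.dist x v = ∑ y, G.dist v y := by
      simp only [hsplit (G.dist v), dist_self, zero_add, G.dist_comm]
    rw [hsplit]
    simp only [hsplit (G.dist _), sum_add_distrib]
    simp only [hsplit (G.dist v)] at hrow
    omega
  have hGv : ∑ x, ∑ y, (deleteVertex G v).dist x y =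
      ∑ x : {u // u ≠ v}, ∑ y : {u // u ≠ v}, G.dist x y + 2 * ∑ y, G.dist v y := by
    simp only [hdist, sum_add_distrib]
    rw [sum_comm (f := fun x y : {u // u ≠ v} ↦ η y x), hη]
    ring
  rw [wiener, wiener, hG, hGv]

end Distance

section Iso

variable {V W : Type*} {G : SimpleGraph V} {H : SimpleGraph W}

theorem dist_map_iso (e : G ≃g H) (x y : V) : H.dist (e x) (e y) = G.dist x y := by
  rw [dist_eq_sInf, dist_eq_sInf]
  congr 1
  ext n
  constructor
  · rintro ⟨p, rfl⟩
    exact ⟨(p.map e.symm.toHom).copy (e.symm_apply_apply x) (e.symm_apply_apply y), by simp⟩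
  · rintro ⟨p, rfl⟩
    exact ⟨p.map e.toHom, p.length_map _⟩

theorem wiener_eq_of_iso [Fintype V] [Fintype W] (e : G ≃g H) : wiener G = wiener H := by
  simp only [wiener, ← dist_map_iso e]
  congr 1
  exact Fintype.sum_equiv e.toEquiv _ _ fun x ↦ Fintype.sum_equiv e.toEquiv _ _ fun y ↦ rfl

/-- The isomorphism of vertex-deleted subgraphs induced by a graph isomorphism. -/
def deleteVertexIso (e : G ≃g H) (v : V) : deleteVertex G v ≃g deleteVertex H (e v) :=
  e.induce <| e.toEquiv.bijOn fun _ ↦ e.injective.ne_iff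

theorem IsSoltes.map_iso [Fintype V] [Fintype W] (e : G ≃g H) {v : V} (hv : IsSoltes G v) :
    IsSoltes H (e v) :=
  ⟨(deleteVertexIso e v).connected_iff.mp hv.1, by
    rw [← wiener_eq_of_iso (deleteVertexIso e v), hv.2, wiener_eq_of_iso e]⟩

theorem IsCubic.map_iso (e : G ≃g H) (hG : IsCubic G) : IsCubic H := by
  intro w
  obtain ⟨v, rfl⟩ := e.surjective w
  exact (Nat.card_congr (e.mapNeighborSet v)).symm.trans (hG v)

theorem TwoConnected.map_iso [Fintype V] [Fintype W] (e : G ≃g H) (hG : TwoConnected G) :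
    TwoConnected H := by
  obtain ⟨hconn, hcard, hdel⟩ := hG
  refine ⟨e.connected_iff.mp hconn, hcard.trans_eq (Fintype.card_congr e.toEquiv), fun w ↦ ?_⟩
  obtain ⟨v, rfl⟩ := e.surjective w
  exact (deleteVertexIso e v).connected_iff.mp (hdel v)

end Iso

/-- The edges within a row of `soltesLadder c q`, from column `t` to a column `u` on its right:
the path through all columns, and the chords `0 — 2` and `c + 3 — c + 5`. -/
def RowLink (c t u : ℕ) : Prop :=
  u = t + 1 ∨ (t = 0 ∧ u = 2) ∨ (t = c + 3 ∧ u = c + 5)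

/-- The edges between the two rows of `soltesLadder c q`, from column `t` to a column `u ≥ t`.
There are two crossing pairs, between columns `c + 1` and `c + 2` and between the last two columns,
and a rung in each column other than `2`, `c + 3`, `c + 5`, where a chord is the third edge, and
`c + 1`, `c + 2`, `c + q - 1`, where a crossing edge is. -/
def CrossLink (c q t u : ℕ) : Prop :=
  (u = t ∧ t ≠ 2 ∧ t ≠ c + 1 ∧ t ≠ c + 2 ∧ t ≠ c + 3 ∧ t ≠ c + 5 ∧ t + 1 ≠ c + q) ∨
    (t = c + 1 ∧ u = c + 2) ∨ (t + 1 = c + q ∧ u = c + q)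

/-- The cubic graph that provides the Šoltés vertices; the vertex `(t, b)` lies in column `t` and
row `b`. There are `c` columns on the left of the two hubs and `q` on their right. Cubic for
`4 ≤ c` and `7 ≤ q`, where the exceptional columns do not interfere. -/
def soltesLadder (c q : ℕ) : SimpleGraph (Fin (c + 1 + q) × Bool) where
  Adj x y := if x.2 = y.2 then RowLink c x.1 y.1 ∨ RowLink c y.1 x.1
    else CrossLink c q x.1 y.1 ∨ CrossLink c q y.1 x.1
  symm := ⟨fun x y h ↦ by simpa only [eq_comm, or_comm] using h⟩
  loopless := ⟨fun x h ↦ by simp only [RowLink, if_true] at h; omega⟩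

namespace soltesLadder

variable {c q : ℕ}

theorem adj_iff {x y : Fin (c + 1 + q) × Bool} : (soltesLadder c q).Adj x y ↔
    if x.2 = y.2 then RowLink c x.1 y.1 ∨ RowLink c y.1 x.1
    else CrossLink c q x.1 y.1 ∨ CrossLink c q y.1 x.1 := by
  rfl

theorem isCubic (hc : 4 ≤ c) (hq : 7 ≤ q) : IsCubic (soltesLadder c q) := by
  rintro ⟨⟨t, ht⟩, b⟩
  refine Set.ncard_eq_three.mpr
    ⟨(⟨if t = 0 then 2 else t - 1, by grind⟩, b),
      (⟨if t = c + q then c + q - 1 else t + 1, by grind⟩, if t = c + q then !b else b),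
      (⟨if t = 2 then 0 else if t = c + 1 then c + 2 else if t = c + 2 then c + 1
        else if t = c + 3 then c + 5 else if t = c + 5 then c + 3
        else if t + 1 = c + q then c + q else t, by grind⟩,
        if t = 2 ∨ t = c + 3 ∨ t = c + 5 then b else !b), ?_, ?_, ?_, ?_⟩
  · grind
  · grind
  · grind
  · ext ⟨⟨u, hu⟩, a⟩
    simp only [mem_neighborSet, adj_iff, RowLink, CrossLink, Set.mem_insert_iff,
      Set.mem_singleton_iff, Prod.mk.injEq, Fin.mk.injEq]
    rcases eq_or_ne b a with rfl | hab
    · simp only [if_true, and_true, eq_comm (a := b), ite_eq_left_iff, ite_eq_right_iff,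
        Bool.not_eq_self, imp_false, not_not]
      constructor <;> grind (splits := 20)
    · obtain rfl : a = !b := Bool.eq_not.mpr hab.symm
      simp only [if_false, Bool.eq_not_self, and_false, false_or, eq_comm (a := !b),
        ite_eq_left_iff, ite_eq_right_iff, imp_false, not_not]
      constructor <;> grind (splits := 20)

theorem adj_pred {t : ℕ} (h0 : t ≠ 0) (ht : t < c + 1 + q) (b : Bool) :
    (soltesLadder c q).Adj (⟨t, ht⟩, b) (⟨t - 1, by omega⟩, b) := by
  simp only [adj_iff, RowLink, if_true]
  omega

theorem adj_succ {t : ℕ} (ht : t + 1 < c + 1 + q) (b : Bool) :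
    (soltesLadder c q).Adj (⟨t, by omega⟩, b) (⟨t + 1, ht⟩, b) := by
  simp [adj_iff, RowLink]

theorem adj_not {t : ℕ} (ht : t < c + 1 + q) (b : Bool) (h : CrossLink c q t t) :
    (soltesLadder c q).Adj (⟨t, ht⟩, b) (⟨t, ht⟩, !b) := by
  simpa [adj_iff] using h

theorem deleteVertex_connected (hc : 4 ≤ c) (hq : 7 ≤ q)
    (x : Fin (c + 1 + q) × Bool) : (deleteVertex (soltesLadder c q) x).Connected := by
  obtain ⟨⟨s, hs⟩, a⟩ := x
  let f : Fin (c + 1 + q) × Bool → ℕ := fun y ↦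
    if y.2 = a then if y.1 < s then c + 1 + q + y.1 else 2 * (c + 1 + q) - y.1 else y.1
  refine connected_of_exists_adj_lt (b := ⟨(⟨0, by omega⟩, !a), by simp⟩) (fun y ↦ f y) ?_
  rintro ⟨⟨⟨t, ht⟩, b⟩, hx⟩ hbase
  suffices h : ∃ y, (soltesLadder c q).Adj (⟨t, ht⟩, b) y ∧ y ≠ (⟨s, hs⟩, a) ∧
      f y < f (⟨t, ht⟩, b) by
    obtain ⟨y, hadj, hy, hlt⟩ := h
    exact ⟨⟨y, hy⟩, hadj, hlt⟩
  rcases eq_or_ne b a with rfl | hb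
  · have hts : t ≠ s := by grind
    by_cases hend : t = 0 ∨ t = c + q
    · exact ⟨_, adj_not ht b (by grind [CrossLink]), by grind, by grind⟩
    by_cases hlt : t < s
    · exact ⟨_, adj_pred (by omega) ht b, by grind, by grind⟩
    · exact ⟨_, adj_succ (by omega) b, by grind, by grind⟩
  · obtain rfl : b = !a := Bool.eq_not.mpr hb
    exact ⟨_, adj_pred (by grind) ht _, by grind, by grind⟩

/-- The coordinate of column `t` along the ladder. The two chords make columns `0` and `1`, as well
as columns `c + 4` and `c + 5`, share a coordinate. -/
def pos (c t : ℕ) : ℕ :=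
  if t = 0 then 1 else if t ≤ c + 4 then t else t - 1

/-- The column reached from column `t ≠ c` by the row edge that leads towards column `c` fastest. -/
def inward (c t : ℕ) : ℕ :=
  if t = 0 then 2 else if t < c then t + 1 else if t = c + 5 then c + 3 else t - 1

theorem adj_inward (hc : 4 ≤ c) {t : ℕ} (htc : t ≠ c) (ht : t < c + 1 + q) (b : Bool) :
    (soltesLadder c q).Adj (⟨t, ht⟩, b) (⟨inward c t, by grind [inward]⟩, b) := by
  simp only [adj_iff, RowLink, inward, if_true]
  grind

theorem pos_le_pos_add_one (x y : Fin (c + 1 + q) × Bool) (h : (soltesLadder c q).Adj x y) :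
    pos c y.1 ≤ pos c x.1 + 1 := by
  grind [adj_iff, RowLink, CrossLink, pos]

/-- The vertex in column `c` and row `a`, which turns out to be a Šoltés vertex. -/
def hub (c q : ℕ) (a : Bool) : Fin (c + 1 + q) × Bool :=
  (⟨c, by omega⟩, a)

/-- The distance from `hub c q a`, see `dist_hub`. Changing row costs an extra step up to
column `c + 1`; further right it is free, by the crossing edges. -/
def level (c : ℕ) (a : Bool) (x : Fin (c + 1 + q) × Bool) : ℕ :=
  Nat.dist (pos c x.1) c + if x.2 ≠ a ∧ x.1 ≤ c + 1 then 1 else 0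

theorem level_le_level_add_one (hq : 7 ≤ q) {a : Bool} (x y : Fin (c + 1 + q) × Bool)
    (h : (soltesLadder c q).Adj x y) : level c a y ≤ level c a x + 1 := by
  rw [adj_iff] at h
  unfold level Nat.dist pos
  split_ifs at h with hrow
  · unfold RowLink at h
    rcases eq_or_ne y.2 a with ha | ha <;> grind
  · unfold CrossLink at h
    rcases eq_or_ne x.2 a with ha | ha <;> grind (splits := 20)

theorem exists_adj_level_add_one_eq (hc : 4 ≤ c) (hq : 7 ≤ q) {a : Bool}
    (x : Fin (c + 1 + q) × Bool) (hx : x ≠ hub c q a) :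
    ∃ y, (soltesLadder c q).Adj x y ∧ level c a y + 1 = level c a x := by
  obtain ⟨⟨t, ht⟩, b⟩ := x
  rcases eq_or_ne t c with rfl | htc
  · obtain rfl : a = !b := Bool.eq_not.mpr (by grind [hub])
    exact ⟨_, adj_not ht b (by grind [CrossLink]), by grind [level, Nat.dist, pos]⟩
  rcases eq_or_ne t (c + 2) with rfl | htc2
  · refine ⟨(⟨c + 1, by omega⟩, a), ?_, by grind [level, Nat.dist, pos]⟩
    grind [adj_iff, RowLink, CrossLink]
  · exact ⟨_, adj_inward hc htc ht b, by grind (splits := 20) [level, Nat.dist, pos, inward]⟩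

theorem connected (hc : 4 ≤ c) (hq : 7 ≤ q) : (soltesLadder c q).Connected :=
  connected_of_exists_adj_lt (level c true) fun x hx ↦
    (exists_adj_level_add_one_eq hc hq x hx).imp fun _ ⟨hxy, hy⟩ ↦ ⟨hxy, hy ▸ Nat.lt_succ_self _⟩

theorem dist_hub (hc : 4 ≤ c) (hq : 7 ≤ q) (a : Bool)
    (x : Fin (c + 1 + q) × Bool) :
    (soltesLadder c q).dist (hub c q a) x = level c a x :=
  dist_eq_of_exists_adj_succ (by grind [level, Nat.dist, pos, hub]) (level_le_level_add_one hq)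
    (exists_adj_level_add_one_eq hc hq) x

theorem dist_across (hc : 4 ≤ c) (hq : 7 ≤ q) {x y : Fin (c + 1 + q) × Bool}
    (hx : x.1 ≤ c) (hy : c < y.1) : (soltesLadder c q).dist x y + pos c x.1 =
      pos c y.1 + if x.2 ≠ y.2 ∧ y.1 = c + 1 then 1 else 0 := by
  have hG := connected hc hq
  apply le_antisymm
  · have htri := hG.dist_triangle (u := x) (v := hub c q x.2) (w := y)
    rw [dist_comm (u := x) (v := hub c q x.2), dist_hub hc hq,
      dist_hub hc hq] at htri
    grind [level, Nat.dist, pos, hub]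
  · split_ifs with h
    · let f (z : Fin (c + 1 + q) × Bool) : ℕ :=
        if z.1 ≤ c + 1 then pos c z.1 + if z.2 = y.2 then 1 else 0 else c + 2
      have hf : ∀ z w, (soltesLadder c q).Adj z w → f w ≤ f z + 1 := by
        intro z w h
        grind (splits := 20) [adj_iff, RowLink, CrossLink, pos]
      have := le_add_dist_of_adj_le hf hG x y
      grind (splits := 20) [pos]
    · have := le_add_dist_of_adj_le pos_le_pos_add_one hG x y
      omega

/-- A coordinate along the ladder without `hub c q a`, in which every path between the two sides
runs through `hub c q (!a)` at coordinate `c + 1`: distances to that hub and across it are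
differences of coordinates. -/
def detourPos (c : ℕ) (a : Bool) (x : Fin (c + 1 + q) × Bool) : ℕ :=
  if x.1 ≤ c then pos c x.1 + if x.2 = a then 0 else 1
  else if x.1 = c + 1 ∧ x.2 = a then c + 4
  else pos c x.1 + 1

theorem detourPos_le_detourPos_add_one (hc : 4 ≤ c) (hq : 7 ≤ q) {a : Bool}
    {x y : Fin (c + 1 + q) × Bool}
    (h : (soltesLadder c q).Adj x y) (hx : x ≠ hub c q a) (hy : y ≠ hub c q a) :
    detourPos c a y ≤ detourPos c a x + 1 := by
  have hx' : ¬ (x.1 = c ∧ x.2 = a) := by grind [hub]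
  have hy' : ¬ (y.1 = c ∧ y.2 = a) := by grind [hub]
  rw [adj_iff] at h
  unfold detourPos pos
  split_ifs at h with hrow
  · unfold RowLink at h
    rcases eq_or_ne y.2 a with ha | ha <;> grind (splits := 20)
  · unfold CrossLink at h
    rcases eq_or_ne x.2 a with ha | ha <;> grind (splits := 20)

theorem exists_adj_dist_detourPos_add_one_eq (hc : 4 ≤ c) (hq : 7 ≤ q) {a : Bool}
    {x : Fin (c + 1 + q) × Bool} (hx : ∀ b, x ≠ hub c q b) :
    ∃ y, (soltesLadder c q).Adj x y ∧ y ≠ hub c q a ∧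
      Nat.dist (detourPos c a y) (c + 1) + 1 = Nat.dist (detourPos c a x) (c + 1) := by
  obtain ⟨⟨t, ht⟩, b⟩ := x
  have htc : t ≠ c := by
    rintro rfl
    exact hx b rfl
  by_cases hleft : t + 1 = c ∧ b = a
  · refine ⟨_, adj_not ht b (by grind [CrossLink]), by grind [hub], ?_⟩
    grind [Nat.dist, pos, detourPos]
  by_cases hright : t = c + 1 ∧ b = a
  · refine ⟨_, adj_succ (by omega) b, by grind [hub], ?_⟩
    grind [Nat.dist, pos, detourPos]
  by_cases htc2 : t = c + 2
  · refine ⟨(⟨c + 1, by omega⟩, !a), ?_, by grind [hub], ?_⟩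
    · grind [adj_iff, RowLink, CrossLink]
    · grind [Nat.dist, pos, detourPos]
  refine ⟨_, adj_inward hc htc ht b, by grind [hub, inward], ?_⟩
  grind (splits := 20) [Nat.dist, pos, detourPos, inward]

theorem deleteVertex_dist_hub (hc : 4 ≤ c) (hq : 7 ≤ q) {a : Bool}
    (ha : hub c q (!a) ≠ hub c q a) (x : {x // x ≠ hub c q a}) :
    (deleteVertex (soltesLadder c q) (hub c q a)).dist ⟨hub c q (!a), ha⟩ x =
      Nat.dist (detourPos c a x.1) (c + 1) := by
  refine dist_eq_of_exists_adj_succ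
    (f := fun x ↦ Nat.dist (detourPos c a x.1) (c + 1)) ?_ ?_ ?_ x
  · grind [detourPos, Nat.dist, hub, pos]
  · intro x y h
    have hxy : detourPos c a y.1 ≤ detourPos c a x.1 + 1 :=
      detourPos_le_detourPos_add_one hc hq h x.2 y.2
    have hyx : detourPos c a x.1 ≤ detourPos c a y.1 + 1 :=
      detourPos_le_detourPos_add_one hc hq h.symm y.2 x.2
    unfold Nat.dist
    omega
  · rintro ⟨x, hx⟩ hxz
    have hxb (b : Bool) : x ≠ hub c q b := by
      rcases eq_or_ne b a with rfl | hb
      · exact hx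
      · obtain rfl : b = !a := Bool.eq_not.mpr hb
        exact fun h ↦ hxz (Subtype.ext h)
    obtain ⟨y, hadj, hy, heq⟩ := exists_adj_dist_detourPos_add_one_eq (a := a) hc hq hxb
    exact ⟨⟨y, hy⟩, hadj, heq⟩

theorem deleteVertex_dist_across (hc : 4 ≤ c) (hq : 7 ≤ q) {a : Bool}
    {x y : {x // x ≠ hub c q a}} (hx : x.1.1 ≤ c) (hy : c < y.1.1) :
    (deleteVertex (soltesLadder c q) (hub c q a)).dist x y + detourPos c a x.1 =
      detourPos c a y.1 := by
  have hG := deleteVertex_connected hc hq (hub c q a)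
  apply le_antisymm
  · have ha : hub c q (!a) ≠ hub c q a := by grind [hub]
    have htri := hG.dist_triangle (u := x) (v := ⟨hub c q (!a), ha⟩) (w := y)
    rw [dist_comm (u := x) (v := ⟨hub c q (!a), ha⟩), deleteVertex_dist_hub hc hq,
      deleteVertex_dist_hub hc hq] at htri
    grind (splits := 20) [Nat.dist, pos, detourPos, hub]
  · have := le_add_dist_of_adj_le (f := fun x : {x // x ≠ hub c q a} ↦ detourPos c a x.1)
      (fun x y h ↦ detourPos_le_detourPos_add_one hc hq h x.2 y.2) hG x y
    omega

theorem eq_hub_of_adj_of_lt (hc : 2 ≤ c) (hq : 2 ≤ q) {x y : Fin (c + 1 + q) × Bool}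
    (hx : x.1 ≤ c) (hy : c < y.1) (h : (soltesLadder c q).Adj x y) :
    x = hub c q y.2 ∧ y.1.1 = c + 1 := by
  rw [adj_iff] at h
  split_ifs at h with hrow
  · unfold RowLink at h
    refine ⟨Prod.ext (Fin.ext (by simp only [hub]; omega)) hrow, ?_⟩
    omega
  · unfold CrossLink at h
    omega

theorem eq_of_hub_adj {a : Bool} {x : Fin (c + 1 + q) × Bool} (hc : 3 ≤ c) (hq : 0 < q)
    (h : (soltesLadder c q).Adj (hub c q a) x) :
    x = hub c q (!a) ∨ x = (⟨c - 1, by omega⟩, a) ∨ c < x.1 := by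
  obtain ⟨⟨t, ht⟩, b⟩ := x
  simp only [adj_iff, hub, RowLink, CrossLink, Prod.mk.injEq, Fin.mk.injEq] at h ⊢
  rcases eq_or_ne b a with rfl | hb
  · grind
  · obtain rfl : b = !a := Bool.eq_not.mpr hb
    simp only [Bool.eq_not_self, if_false] at h
    grind

/-- A retraction of the ladder onto the columns `t ≤ c` without `hub c q a`; it does not increase
distances, so deleting that hub preserves the distances between these vertices. -/
def leftRetract (c q : ℕ) (a : Bool) (x : Fin (c + 1 + q) × Bool) : {x // x ≠ hub c q a} :=
  if h : x = hub c q a then ⟨(⟨c - 1, by omega⟩, !a), by grind [hub]⟩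
  else if x.1 ≤ c then ⟨x, h⟩ else ⟨hub c q (!a), by grind [hub]⟩

theorem leftRetract_hub (a : Bool) :
    (leftRetract c q a (hub c q a)).1 = (⟨c - 1, by omega⟩, !a) := by
  simp only [leftRetract, dif_pos]

theorem leftRetract_of_le {a : Bool} {x : Fin (c + 1 + q) × Bool} (hxa : x ≠ hub c q a)
    (hx : x.1 ≤ c) : (leftRetract c q a x).1 = x := by
  simp only [leftRetract, dif_neg hxa, if_pos hx]

theorem leftRetract_of_lt {a : Bool} {x : Fin (c + 1 + q) × Bool} (hx : c < x.1) :
    (leftRetract c q a x).1 = hub c q (!a) := by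
  have hxa : x ≠ hub c q a := fun h ↦ by simp [h, hub] at hx
  simp only [leftRetract, dif_neg hxa, if_neg hx.not_ge]

theorem adj_leftRetract_hub (hc : 4 ≤ c) (hq : 7 ≤ q) {a : Bool} {x : Fin (c + 1 + q) × Bool}
    (h : (soltesLadder c q).Adj (hub c q a) x) :
    (soltesLadder c q).Adj (leftRetract c q a (hub c q a)) (leftRetract c q a x) := by
  have hrow : (soltesLadder c q).Adj (⟨c - 1, by omega⟩, !a) (hub c q (!a)) :=
    (adj_pred (by omega) (by omega) _).symm
  rw [leftRetract_hub]
  rcases eq_of_hub_adj (by omega) (by omega) h with rfl | rfl | hx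
  · rwa [leftRetract_of_le (by simp [hub]) le_rfl]
  · rw [leftRetract_of_le (by grind [hub]) (Nat.sub_le c 1)]
    exact (adj_not (by omega) a (by grind [CrossLink])).symm
  · rwa [leftRetract_of_lt hx]

theorem leftRetract_eq_or_adj (hc : 4 ≤ c) (hq : 7 ≤ q) {a : Bool}
    {x y : Fin (c + 1 + q) × Bool} (h : (soltesLadder c q).Adj x y) (hx : x.1 ≤ c) :
    leftRetract c q a x = leftRetract c q a y ∨
      (soltesLadder c q).Adj (leftRetract c q a x) (leftRetract c q a y) := by
  rcases eq_or_ne x (hub c q a) with rfl | hxa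
  · exact .inr (adj_leftRetract_hub hc hq h)
  rcases eq_or_ne y (hub c q a) with rfl | hya
  · exact .inr (adj_leftRetract_hub hc hq h.symm).symm
  rcases le_or_gt y.1.1 c with hy | hy
  · exact .inr (by rwa [leftRetract_of_le hxa hx, leftRetract_of_le hya hy])
  · have hxy := (eq_hub_of_adj_of_lt (by omega) (by omega) hx hy h).1
    have hrow : y.2 = !a := Bool.eq_not.mpr fun hya ↦ hxa (hya ▸ hxy)
    exact .inl (Subtype.ext (by rw [leftRetract_of_le hxa hx, leftRetract_of_lt hy, hxy, hrow]))

theorem deleteVertex_dist_left (hc : 4 ≤ c) (hq : 7 ≤ q) {a : Bool}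
    {x y : {x // x ≠ hub c q a}} (hx : x.1.1 ≤ c) (hy : y.1.1 ≤ c) :
    (deleteVertex (soltesLadder c q) (hub c q a)).dist x y = (soltesLadder c q).dist x y := by
  refine dist_deleteVertex_eq_of_retraction (r := leftRetract c q a) (connected hc hq)
    (deleteVertex_connected hc hq _) (fun z w h ↦ ?_) (Subtype.ext (leftRetract_of_le x.2 hx))
      (Subtype.ext (leftRetract_of_le y.2 hy))
  rcases le_or_gt z.1.1 c with hz | hz
  · exact leftRetract_eq_or_adj hc hq h hz
  rcases le_or_gt w.1.1 c with hw | hw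
  · exact (leftRetract_eq_or_adj hc hq h.symm hw).imp Eq.symm Adj.symm
  · exact .inl (Subtype.ext (by rw [leftRetract_of_lt hz, leftRetract_of_lt hw]))

theorem deleteVertex_dist_right (hc : 4 ≤ c) (hq : 7 ≤ q) {a : Bool}
    {x y : {x // x ≠ hub c q a}} (hx : c < x.1.1) (hy : c < y.1.1) :
    (deleteVertex (soltesLadder c q) (hub c q a)).dist x y = (soltesLadder c q).dist x y := by
  let r (z : Fin (c + 1 + q) × Bool) : {x // x ≠ hub c q a} :=
    if h : z.1 ≤ c then ⟨(⟨c + 2, by omega⟩, !a), by grind [hub]⟩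
    else ⟨z, by grind [hub]⟩
  have hr_left {z : Fin (c + 1 + q) × Bool} (hz : z.1 ≤ c) :
      (r z).1 = (⟨c + 2, by omega⟩, !a) := by
    simp only [r, dif_pos hz]
  have hr_right {z : Fin (c + 1 + q) × Bool} (hz : c < z.1) : (r z).1 = z := by
    simp only [r, dif_neg hz.not_ge]
  clear_value r
  have hadj_left {z w} (h : (soltesLadder c q).Adj z w) (hz : z.1 ≤ c) :
      r z = r w ∨ (soltesLadder c q).Adj (r z) (r w) := by
    rcases le_or_gt w.1.1 c with hw | hw
    · exact .inl (Subtype.ext (by rw [hr_left hz, hr_left hw]))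
    · have hwc := (eq_hub_of_adj_of_lt (by omega) (by omega) hz hw h).2
      rw [hr_left hz, hr_right hw]
      exact .inr (by grind [adj_iff, RowLink, CrossLink])
  refine dist_deleteVertex_eq_of_retraction (r := r) (connected hc hq)
    (deleteVertex_connected hc hq _) (fun z w h ↦ ?_) (Subtype.ext (hr_right hx))
      (Subtype.ext (hr_right hy))
  rcases le_or_gt z.1.1 c with hz | hz
  · exact hadj_left h hz
  rcases le_or_gt w.1.1 c with hw | hw
  · exact (hadj_left h.symm hw).imp Eq.symm Adj.symm
  · exact .inr (by rwa [hr_right hz, hr_right hw])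

/-- The number of steps that the deletion of `hub c q a` adds to the distance from `x` to `y`, if
`x` lies on the left and `y` on the right; zero otherwise, so that every pair of vertices is
counted in one order only. -/
def detour (c : ℕ) (a : Bool) (x y : Fin (c + 1 + q) × Bool) : ℕ :=
  if x.1 ≤ c ∧ c < y.1 ∧ ¬ (x.1 = c ∧ x.2 = a) then
    if y.1 ≠ c + 1 then if x.2 = a then 1 else 0
    else if y.2 ≠ a then 0
    else if x.2 = a then 3 else 1
  else 0

theorem deleteVertex_dist_across_eq_add_detour (hc : 4 ≤ c) (hq : 7 ≤ q) {a : Bool}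
    {x y : {x // x ≠ hub c q a}} (hx : x.1.1 ≤ c) (hy : c < y.1.1) :
    (deleteVertex (soltesLadder c q) (hub c q a)).dist x y =
      (soltesLadder c q).dist x y + detour c a x.1 y.1 := by
  have hG := dist_across hc hq hx hy
  have hGv := deleteVertex_dist_across hc hq hx hy
  have hne : ¬ (x.1.1 = c ∧ x.1.2 = a) := by grind [hub]
  have hrow (hxa : x.1.2 ≠ a) (hya : y.1.2 ≠ a) : x.1.2 = y.1.2 :=
    (Bool.eq_not.mpr hxa).trans (Bool.eq_not.mpr hya).symm
  grind (splits := 20) [detour, detourPos, pos]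

theorem deleteVertex_dist_eq_add_detour (hc : 4 ≤ c) (hq : 7 ≤ q) (a : Bool)
    (x y : {x // x ≠ hub c q a}) :
    (deleteVertex (soltesLadder c q) (hub c q a)).dist x y =
      (soltesLadder c q).dist x y + detour c a x.1 y.1 + detour c a y.1 x.1 := by
  have hzero {x y : Fin (c + 1 + q) × Bool} (h : c < x.1.1 ∨ y.1.1 ≤ c) : detour c a x y = 0 :=
    if_neg (by omega)
  rcases le_or_gt x.1.1.1 c with hx | hx <;> rcases le_or_gt y.1.1.1 c with hy | hy
  · rw [deleteVertex_dist_left hc hq hx hy, hzero (.inr hy), hzero (.inr hx), add_zero, add_zero]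
  · rw [deleteVertex_dist_across_eq_add_detour hc hq hx hy, hzero (.inl hy), add_zero]
  · rw [SimpleGraph.dist_comm, deleteVertex_dist_across_eq_add_detour hc hq hy hx,
      hzero (.inl hx), add_zero, SimpleGraph.dist_comm]
  · rw [deleteVertex_dist_right hc hq hx hy, hzero (.inl hx), hzero (.inl hy), add_zero,
      add_zero]

theorem sum_eq_sum_left_add_sum_right (a : Bool) (f : Fin (c + 1 + q) × Bool → ℕ) :
    ∑ x, f x =
      ∑ t : Fin (c + 1), (f (Fin.castAdd q t, a) + f (Fin.castAdd q t, !a)) +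
        ∑ t : Fin q, (f (Fin.natAdd (c + 1) t, a) + f (Fin.natAdd (c + 1) t, !a)) := by
  have hrow (g : Bool → ℕ) : ∑ b, g b = g a + g (!a) := by
    cases a <;> simp [add_comm]
  rw [Fintype.sum_prod_type, Fin.sum_univ_add]
  simp only [hrow]

theorem sum_detour (hq : 0 < q) (a : Bool) (t : Fin (c + 1)) (b : Bool) :
    ∑ y, detour c a (Fin.castAdd q t, b) y =
      if b = a then if t < c then 2 * q + 1 else 0 else 1 := by
  obtain ⟨q, rfl⟩ := Nat.exists_eq_add_one_of_ne_zero hq.ne'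
  have hleft (s : Fin (c + 1)) (b' : Bool) :
      detour c a (Fin.castAdd (q + 1) t, b) (Fin.castAdd (q + 1) s, b') = 0 :=
    if_neg (by simp only [Fin.val_castAdd]; omega)
  have hfirst : detour c a (Fin.castAdd (q + 1) t, b) (Fin.natAdd (c + 1) 0, a) +
      detour c a (Fin.castAdd (q + 1) t, b) (Fin.natAdd (c + 1) 0, !a) =
        if b = a then if t < c then 3 else 0 else 1 := by
    grind [detour, Bool.not_eq_self]
  have hrest (s : Fin q) (b' : Bool) :
      detour c a (Fin.castAdd (q + 1) t, b) (Fin.natAdd (c + 1) s.succ, b') =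
        if b = a ∧ t < c then 1 else 0 := by
    grind [detour]
  rw [sum_eq_sum_left_add_sum_right a, Fin.sum_univ_succ (n := q)]
  simp only [hleft, hfirst, hrest, sum_const, card_univ, Fintype.card_fin, smul_eq_mul]
  grind

theorem sum_sum_detour (hq : 0 < q) (a : Bool) :
    ∑ x : Fin (c + 1 + q) × Bool, ∑ y, detour c a x y = c * (2 * q + 1) + (c + 1) := by
  have hright (t : Fin q) (b : Bool) : ∑ y, detour c a (Fin.natAdd (c + 1) t, b) y = 0 :=
    sum_eq_zero fun y _ ↦ if_neg (by simp only [Fin.val_natAdd]; omega)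
  rw [sum_eq_sum_left_add_sum_right a]
  simp only [hright, sum_detour hq, Fin.sum_univ_castSucc, Fin.val_castSucc, Fin.is_lt,
    Fin.val_last, lt_irrefl, Bool.not_eq_self, if_true, if_false, sum_add_distrib, sum_const,
    card_univ, Fintype.card_fin, smul_eq_mul]
  ring

theorem sum_level_left (hc : 0 < c) (a : Bool) :
    ∑ t : Fin (c + 1), (level c a (Fin.castAdd q t, a) + level c a (Fin.castAdd q t, !a)) + 1 =
      c ^ 2 + 2 * c := by
  obtain ⟨d, rfl⟩ := Nat.exists_eq_add_one_of_ne_zero hc.ne'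
  have hodd : ∑ t : Fin (d + 1), (2 * (d - t) + 1) = (d + 1) ^ 2 := by
    rw [Fin.sum_univ_eq_sum_range fun t ↦ 2 * (d - t) + 1, sum_flip fun t ↦ 2 * t + 1,
      sum_add_distrib, ← mul_sum, mul_comm, sum_range_id_mul_two]
    simp only [add_tsub_cancel_right, sum_const, card_range, smul_eq_mul]
    ring
  have hpos (t : Fin (d + 1)) : level (d + 1) a (Fin.castAdd q t.succ, a) +
      level (d + 1) a (Fin.castAdd q t.succ, !a) = 2 * (d - t) + 1 := by
    grind [level, Nat.dist, pos]
  have hzero : level (d + 1) a (Fin.castAdd q 0, a) + level (d + 1) a (Fin.castAdd q 0, !a) =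
      2 * d + 1 := by
    grind [level, Nat.dist, pos]
  rw [Fin.sum_univ_succ]
  simp only [hpos, hodd, hzero]
  ring

theorem sum_level_right (hq : 4 ≤ q) (a : Bool) :
    ∑ t : Fin q, (level c a (Fin.natAdd (c + 1) t, a) + level c a (Fin.natAdd (c + 1) t, !a)) + q =
      q ^ 2 + 9 := by
  let g (t : ℕ) : ℕ := 2 * (if t ≤ 3 then t + 1 else t) + if t = 0 then 1 else 0
  have hg : ∑ t ∈ range q, g t + q = q ^ 2 + 9 := by
    induction q, hq using Nat.le_induction with
    | base => rfl
    | succ m hm ih =>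
      rw [sum_range_succ]
      grind
  have hlevel (t : Fin q) : level c a (Fin.natAdd (c + 1) t, a) +
      level c a (Fin.natAdd (c + 1) t, !a) = g t := by
    grind [level, Nat.dist, pos]
  simpa only [hlevel, Fin.sum_univ_eq_sum_range g] using hg

theorem sum_level (hc : 0 < c) (hq : 4 ≤ q) (a : Bool) :
    ∑ x : Fin (c + 1 + q) × Bool, level c a x + q = c ^ 2 + 2 * c + q ^ 2 + 8 := by
  have hleft := sum_level_left (q := q) hc a
  have hright := sum_level_right (c := c) hq a
  rw [sum_eq_sum_left_add_sum_right a]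
  omega

-- Without subtraction, the hypothesis `h` reads `(c - q) ^ 2 = q - 7`.
theorem isSoltes_hub (hc : 4 ≤ c) (hq : 7 ≤ q) (h : c ^ 2 + q ^ 2 + 7 = 2 * c * q + q)
    (a : Bool) : IsSoltes (soltesLadder c q) (hub c q a) := by
  refine ⟨deleteVertex_connected hc hq _, wiener_deleteVertex_eq_of_detour
    (η := detour c a) (deleteVertex_dist_eq_add_detour hc hq a) (fun x ↦ if_neg (by simp [hub]))
    (fun x ↦ if_neg (by simp [hub])) ?_⟩
  have hlevel : ∑ x, level c a x + q = c ^ 2 + 2 * c + q ^ 2 + 8 :=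
    sum_level (by omega) (by omega) a
  have hdetour : ∑ x : Fin (c + 1 + q) × Bool, ∑ y, detour c a x y = c * (2 * q + 1) + (c + 1) :=
    sum_sum_detour (by omega) a
  simp only [dist_hub hc hq]
  linarith

theorem twoConnected (hc : 4 ≤ c) (hq : 7 ≤ q) : TwoConnected (soltesLadder c q) := by
  refine ⟨connected hc hq, ?_, deleteVertex_connected hc hq⟩
  simp only [Fintype.card_prod, Fintype.card_fin, Fintype.card_bool]
  omega

end soltesLadder

/-- For every `N` there is a cubic, 2-connected, connected simple graph
on more than `N` vertices with at least two distinct Šoltés vertices; hence there are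
infinitely many cubic 2-connected graphs with at least two Šoltés vertices. -/
theorem exists_cubic_twoConnected_with_two_soltes_vertices (N : ℕ) :
    ∃ (n : ℕ) (G : SimpleGraph (Fin n)),
      N < n ∧ G.Connected ∧ IsCubic G ∧ TwoConnected G ∧
      ∃ u₁ u₂ : Fin n, u₁ ≠ u₂ ∧ IsSoltes G u₁ ∧ IsSoltes G u₂ := by
  obtain ⟨q, hq⟩ : ∃ q, q = N ^ 2 + 7 := ⟨_, rfl⟩
  obtain ⟨c, hc⟩ : ∃ c, c = q + N := ⟨_, rfl⟩
  have hq7 : 7 ≤ q := by omega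
  have hc4 : 4 ≤ c := by omega
  have hcard : Fintype.card (Fin (c + 1 + q) × Bool) = (c + 1 + q) * 2 := by simp
  let e := (soltesLadder c q).overFinIso hcard
  have h2 := (soltesLadder.twoConnected hc4 hq7).map_iso e
  have hsoltes (a : Bool) := (soltesLadder.isSoltes_hub hc4 hq7 (by subst hc hq; ring) a).map_iso e
  exact ⟨_, _, by omega, h2.1, (soltesLadder.isCubic hc4 hq7).map_iso e, h2,
    _, _, e.injective.ne (by simp [soltesLadder.hub]), hsoltes true, hsoltes false⟩
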